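/- arXiv:2007.01914 — 2 statements merged into one kernel-verified Lean document; each statement's English description precedes it below -/
import Mathlib

section
/- Let F be a totally real number field and let a be a nonzero element of the ring of integers O_F that is not a square in F and is totally negative (i.e., σ(a) < 0 for every embedding σ : F → ℝ), so that K = F(√a) is a totally imaginary quadratic extension of F. Then there exists a prime number p such that the quaternion algebra B = (a, p / F) is a division ring. -/
/-! The algebra `(a, p / F)` has reduced norm `N(z) - p N(w)`, where `z`, `w` range over
`K = F(√a)` and `N` is the norm of `K / F`. Suppose `P` is a prime of `F` above `p`, unramified over
`ℚ`, not containing `2 a`, and such that `a` is not a square modulo `P`. Then `P` is inert in `K`, so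
`N` takes only values of even valuation at `P`, whereas `p` has valuation `1`; hence the reduced norm
vanishes only at `0` and every nonzero element is a unit (`isUnit_of_inert`). It remains to find an
inert prime `P` outside the finite set `T` of primes dividing `2 a` or the different.

The existence of such a `P` follows from the simple pole of Dedekind zeta functions at `1`. If `a`
were a square modulo every `P ∉ T`, all these primes would split in `K` into two primes of the same
norm (`exists_prime_above`), and comparing Euler products gives `ζ_F(s) ^ 2 ≤ 4 ^ |T| ζ_K(s)` for
`s > 1` near `1` (`eulerSum_sq_le`). Multiplying by `(s - 1) ^ 2` and letting `s → 1` yields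
`(residue of ζ_F) ^ 2 ≤ 0`, a contradiction (`exists_prime_not_sq`).
-/

section
open scoped ENNReal Quaternion
open NumberField IsDedekindDomain Filter Topology

/-! ### Comparison of formal Euler products -/

/-- Removing one Euler factor: splitting a multiset into its copies of `q` and the rest bounds the
sum over multisets avoiding `T` by `(1 - x q)⁻¹` times the sum over those avoiding `insert q T`. -/
theorem tsum_multiset_avoid_le {ι : Type*} (x : ι → ℝ≥0∞) (T : Finset ι) (q : ι) [DecidableEq ι] :
    (∑' m : Multiset ι, if ∀ i ∈ T, i ∉ m then (m.map x).prod else 0) ≤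
      (1 - x q)⁻¹ * ∑' m : Multiset ι,
        if ∀ i ∈ insert q T, i ∉ m then (m.map x).prod else 0 := by
  have hdec (m : Multiset ι) : m = Multiset.replicate (m.count q) q + m.filter (· ≠ q) := by
    conv_lhs => rw [← Multiset.filter_add_not (· = q) m, Multiset.filter_eq']
  have hinj : Function.Injective
      (fun m : Multiset ι => (m.count q, m.filter (· ≠ q))) := by
    intro m n h
    simp only [Prod.mk.injEq] at h
    rw [hdec m, hdec n, h.1, h.2]
  rw [← ENNReal.tsum_geometric, ← ENNReal.tsum_mul_right]
  simp_rw [← ENNReal.tsum_mul_left]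
  rw [← ENNReal.tsum_prod (f := fun (n : ℕ) (m : Multiset ι) => x q ^ n *
    if ∀ i ∈ insert q T, i ∉ m then (m.map x).prod else 0)]
  refine le_trans (ENNReal.tsum_le_tsum fun m => ?_)
    (ENNReal.tsum_comp_le_tsum_of_injective hinj _)
  by_cases h1 : ∀ i ∈ T, i ∉ m
  · have h2 : ∀ i ∈ insert q T, i ∉ m.filter (· ≠ q) := by
      intro i hi
      rcases Finset.mem_insert.1 hi with rfl | hi
      · simp
      · simp [h1 i hi]
    rw [if_pos h1, if_pos h2]
    conv_lhs => rw [hdec m]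
    simp
  · rw [if_neg h1]
    exact zero_le

/-- Removing the Euler factors at all `q ∈ T`. Expanded Euler products are sums over finite
multisets of primes, with values in `ℝ≥0∞` so that no convergence question arises. -/
theorem tsum_multiset_le_avoid {ι : Type*} (x : ι → ℝ≥0∞) (T : Finset ι) [DecidableEq ι] :
    (∑' m : Multiset ι, (m.map x).prod) ≤
      (∏ q ∈ T, (1 - x q)⁻¹) * ∑' m : Multiset {i // i ∉ T},
        (m.map fun i : {i // i ∉ T} => x i).prod := by
  have key : (∑' m : Multiset ι, (m.map x).prod) ≤ (∏ q ∈ T, (1 - x q)⁻¹) *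
      ∑' m : Multiset ι, if ∀ i ∈ T, i ∉ m then (m.map x).prod else 0 := by
    induction T using Finset.induction_on with
    | empty => simp
    | insert q T hq ih =>
      rw [Finset.prod_insert hq, mul_comm (1 - x q)⁻¹, mul_assoc]
      exact ih.trans (by gcongr; exact tsum_multiset_avoid_le x T q)
  refine key.trans (le_of_eq ?_)
  congr 1
  rw [← (Multiset.map_injective (Subtype.val_injective (p := fun i => i ∉ T))).tsum_eq]
  · refine tsum_congr fun m => ?_
    rw [if_pos]
    · simp
    · intro i hi h
      obtain ⟨j, -, rfl⟩ := Multiset.mem_map.1 h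
      exact j.2 hi
  · intro m hm
    have h : ∀ i ∈ m, i ∉ T := fun i hi hT => hm (if_neg fun h => h i hT hi)
    lift m to Multiset {i // i ∉ T} using h
    exact ⟨m, rfl⟩

/-- If each factor `x i` occurs at two places of the family `y`, all these places being distinct,
then the Euler product of `y` dominates the square of that of `x`. -/
theorem sq_tsum_multiset_le {ι κ : Type*} (x : ι → ℝ≥0∞) (y : κ → ℝ≥0∞) (j : ι ⊕ ι → κ)
    (hj : Function.Injective j) (hl : ∀ i, y (j (.inl i)) = x i) (hr : ∀ i, y (j (.inr i)) = x i) :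
    (∑' m : Multiset ι, (m.map x).prod) ^ 2 ≤ ∑' m : Multiset κ, (m.map y).prod := by
  classical
  have hinj : Function.Injective (fun st : Multiset ι × Multiset ι =>
      (st.1.disjSum st.2).map j) := by
    refine (Multiset.map_injective hj).comp ?_
    rintro ⟨s, t⟩ ⟨s', t'⟩ h
    have h (z) : (s.disjSum t).count z = (s'.disjSum t').count z := congrArg (Multiset.count z) h
    simp only [Multiset.disjSum, Multiset.count_add] at h
    have hl (u : Multiset ι) (a : ι) : (u.map (Sum.inl : ι → ι ⊕ ι)).count (.inr a) = 0 :=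
      Multiset.count_eq_zero_of_notMem (by simp)
    have hr (u : Multiset ι) (a : ι) : (u.map (Sum.inr : ι → ι ⊕ ι)).count (.inl a) = 0 :=
      Multiset.count_eq_zero_of_notMem (by simp)
    refine Prod.ext (Multiset.ext.2 fun a => ?_) (Multiset.ext.2 fun a => ?_)
    · simpa [hr, Multiset.count_map_eq_count' _ _ Sum.inl_injective] using h (.inl a)
    · simpa [hl, Multiset.count_map_eq_count' _ _ Sum.inr_injective] using h (.inr a)
  rw [sq, ← ENNReal.tsum_mul_right]
  simp_rw [← ENNReal.tsum_mul_left]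
  rw [← ENNReal.tsum_prod (f := fun m n : Multiset ι => (m.map x).prod * (n.map x).prod)]
  refine le_trans (ENNReal.tsum_le_tsum fun m => ?_)
    (ENNReal.tsum_comp_le_tsum_of_injective hinj _)
  simp [Multiset.disjSum, hl, hr]

/-! ### The Euler product of the Dedekind zeta function -/

/-- The Euler product `∏ (1 - N(P) ^ (-s))⁻¹` over the nonzero primes `P` of `𝓞 K`, expanded as
a sum over finite multisets of primes. For real `s` just above `1` this is the Dedekind zeta
function; it is valued in `ℝ≥0∞`, so it may be compared termwise without summability. -/
noncomputable def eulerSum (K : Type*) [Field K] [NumberField K] (s : ℝ) : ℝ≥0∞ :=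
  ∑' m : Multiset (HeightOneSpectrum (𝓞 K)),
    (m.map fun P => (Ideal.absNorm P.asIdeal : ℝ≥0∞) ^ (-s)).prod

section
variable (K : Type*) [Field K] [NumberField K]

theorem prod_asIdeal_injective : Function.Injective
    (fun m : Multiset (HeightOneSpectrum (𝓞 K)) => (m.map (·.asIdeal)).prod) := by
  intro m n h
  have key (m : Multiset (HeightOneSpectrum (𝓞 K))) :
      UniqueFactorizationMonoid.normalizedFactors (m.map (·.asIdeal)).prod =
        m.map (·.asIdeal) := by
    refine UniqueFactorizationMonoid.normalizedFactors_prod_of_prime fun I hI => ?_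
    obtain ⟨P, -, rfl⟩ := Multiset.mem_map.1 hI
    exact P.prime
  have h' := congrArg UniqueFactorizationMonoid.normalizedFactors h
  simp only [key] at h'
  exact Multiset.map_injective HeightOneSpectrum.asIdeal_injective h'

theorem exists_prod_asIdeal_eq {I : Ideal (𝓞 K)} (hI : I ≠ ⊥) :
    ∃ m : Multiset (HeightOneSpectrum (𝓞 K)), (m.map (·.asIdeal)).prod = I := by
  refine ⟨(UniqueFactorizationMonoid.normalizedFactors I).pmap
    (fun P hP => HeightOneSpectrum.ofPrime hP)
    (fun P hP => UniqueFactorizationMonoid.prime_of_normalized_factor P hP), ?_⟩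
  rw [Multiset.map_pmap]
  simp only [HeightOneSpectrum.ofPrime_asIdeal, Multiset.pmap_eq_map, Multiset.map_id']
  rw [UniqueFactorizationMonoid.prod_normalizedFactors_eq hI, normalize_eq]

/-- By unique factorization of ideals, the expanded Euler product is the Dirichlet series counting
ideals by norm. -/
theorem eulerSum_eq_tsum (s : ℝ) :
    eulerSum K s = ∑' n : ℕ, ENNReal.ofReal
      (if n = 0 then 0 else (Nat.card {I : Ideal (𝓞 K) // Ideal.absNorm I = n} : ℝ) /
        (n : ℝ) ^ s) := by
  -- the zero ideal has norm `0` and must not contribute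
  let g : ℕ → ℝ≥0∞ := fun n => if n = 0 then 0 else (n : ℝ≥0∞) ^ (-s)
  have h1 : eulerSum K s = ∑' I : Ideal (𝓞 K), g (Ideal.absNorm I) := by
    rw [← (prod_asIdeal_injective K).tsum_eq]
    · refine tsum_congr fun m => ?_
      have hne : (m.map (·.asIdeal)).prod ≠ ⊥ := by
        rw [ne_eq, ← Ideal.zero_eq_bot, Multiset.prod_eq_zero_iff]
        intro h
        obtain ⟨P, -, hP⟩ := Multiset.mem_map.1 h
        exact P.ne_bot hP
      simp only [g]
      rw [if_neg (by rwa [Ideal.absNorm_eq_zero_iff])]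
      clear hne
      induction m using Multiset.induction_on with
      | empty => simp
      | cons P m ih =>
        simp only [Multiset.map_cons, Multiset.prod_cons, map_mul, Nat.cast_mul, ih]
        rw [ENNReal.mul_rpow_of_ne_top (by simp) (by simp)]
    · intro I hI
      refine exists_prod_asIdeal_eq K fun h => hI ?_
      simp [g, h]
  rw [h1, ← (Equiv.sigmaFiberEquiv fun I : Ideal (𝓞 K) => Ideal.absNorm I).tsum_eq,
    ENNReal.tsum_sigma']
  refine tsum_congr fun n => ?_
  have h2 (x : {I : Ideal (𝓞 K) // Ideal.absNorm I = n}) : g (Ideal.absNorm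
      ((Equiv.sigmaFiberEquiv fun I : Ideal (𝓞 K) => Ideal.absNorm I) ⟨n, x⟩)) = g n := by
    rw [Equiv.sigmaFiberEquiv_apply, x.2]
  simp_rw [h2, ENNReal.tsum_const]
  simp only [g]
  split_ifs with hn
  · simp
  · have : Finite {I : Ideal (𝓞 K) // Ideal.absNorm I = n} :=
      Ideal.finite_setOfPred_absNorm_eq n
    have hn' : (0 : ℝ) < n := by positivity
    rw [div_eq_mul_inv, ENNReal.ofReal_mul (by positivity), ← Real.rpow_neg hn'.le,
      ← ENNReal.ofReal_rpow_of_pos hn', ENNReal.ofReal_natCast, ENNReal.ofReal_natCast,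
      ENat.card_eq_coe_natCard]
    simp

/-- For real `s` just above `1`, the series converges and its value is the Dedekind zeta
function; hence the residue formula applies to it. -/
theorem tendsto_eulerSum :
    (∀ᶠ s : ℝ in 𝓝[>] 1, eulerSum K s ≠ ∞) ∧
    Tendsto (fun s : ℝ => (s - 1) * (eulerSum K s).toReal) (𝓝[>] 1)
      (𝓝 (dedekindZeta_residue K)) := by
  have hT := tendsto_sub_one_mul_dedekindZeta_nhdsGT K
  have hne : ∀ᶠ s : ℝ in 𝓝[>] 1, ((s : ℂ) - 1) * dedekindZeta K s ≠ 0 :=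
    hT.eventually_ne (by exact_mod_cast dedekindZeta_residue_ne_zero K)
  have key : ∀ᶠ s : ℝ in 𝓝[>] 1, eulerSum K s ≠ ∞ ∧
      dedekindZeta K s = (((eulerSum K s).toReal : ℝ) : ℂ) := by
    filter_upwards [hne] with s hs
    set f : ℕ → ℝ := fun n => if n = 0 then 0 else
      (Nat.card {I : Ideal (𝓞 K) // Ideal.absNorm I = n} : ℝ) / (n : ℝ) ^ s with hf
    have hterm (n : ℕ) : LSeries.term
        (fun n ↦ (Nat.card {I : Ideal (𝓞 K) // Ideal.absNorm I = n} : ℂ)) s n = (f n : ℂ) := by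
      rw [LSeries.term_def]
      simp only [hf]
      split_ifs
      · simp
      · rw [Complex.ofReal_div, Complex.ofReal_cpow (Nat.cast_nonneg n)]
        simp
    have hf0 (n : ℕ) : 0 ≤ f n := by simp only [hf]; split_ifs <;> positivity
    -- a divergent `LSeries` has the junk value `0`, which `hs` excludes
    have hsum : Summable f := by
      by_contra h
      refine right_ne_zero_of_mul hs (LSeries.eq_zero_of_not_LSeriesSummable _ _ fun h' => h ?_)
      rw [LSeriesSummable, funext hterm] at h'
      exact_mod_cast h'
    have hE : eulerSum K s = ENNReal.ofReal (∑' n, f n) := by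
      rw [eulerSum_eq_tsum K s, ENNReal.ofReal_tsum_of_nonneg hf0 hsum]
    refine ⟨by simp [hE], ?_⟩
    rw [hE, ENNReal.toReal_ofReal (tsum_nonneg hf0), dedekindZeta, LSeries, funext hterm,
      Complex.ofReal_tsum]
  refine ⟨key.mono fun _ h => h.1, ?_⟩
  have h2 : Tendsto (fun s : ℝ => (((s - 1) * (eulerSum K s).toReal : ℝ) : ℂ)) (𝓝[>] 1)
      (𝓝 ((dedekindZeta_residue K : ℝ) : ℂ)) := by
    refine hT.congr' (key.mono fun s h => ?_)
    rw [h.2]; push_cast; rfl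
  exact ((Complex.continuous_re.tendsto _).comp h2).congr fun s => Complex.ofReal_re _
end

/-! ### The local criterion for a division algebra -/

section
variable {F : Type*} [Field F] [NumberField F]

/-- A prime number lies in `P ^ 2` only if `P` divides the different; for a prime `P` over `p`, this
says that primes prime to the different are unramified over `ℚ`. -/
theorem natCast_notMem_sq (P : Ideal (𝓞 F)) (p : ℕ) (hp : p.Prime)
    (hP : ¬ P ∣ differentIdeal ℤ (𝓞 F)) : (p : 𝓞 F) ∉ P ^ 2 := by
  intro h
  have := Fact.mk hp
  have := Int.ideal_span_isMaximal_of_prime p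
  refine hP ?_
  simpa using pow_sub_one_dvd_differentIdeal ℤ (p := Ideal.span {(p : ℤ)}) P 2
    (by simpa using hp.ne_zero) (by
      rw [Ideal.map_span, Set.image_singleton, Ideal.dvd_span_singleton]
      simpa using h)

/-- If `a` is a non-square unit modulo `P`, the norm form `u ^ 2 - a w ^ 2` of `F(√a)` has
valuation `2 min (v u, v w)` (a maximum in the multiplicative convention): `P` is inert in
`F(√a)`. -/
theorem valuation_sq_sub_eq (P : HeightOneSpectrum (𝓞 F)) (a : 𝓞 F)
    (hP : ∀ c : 𝓞 F, c ^ 2 - a ∉ P.asIdeal) (haP : a ∉ P.asIdeal) (u w : F) :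
    P.valuation F (u ^ 2 - a * w ^ 2) = max (P.valuation F u) (P.valuation F w) ^ 2 := by
  set v := P.valuation F
  have ha : v (a : F) = 1 := (P.valuation_eq_one_iff_notMem).2 haP
  rcases ne_or_eq (v u) (v w) with h | h
  · have h3 : v (a * w ^ 2) = v w ^ 2 := by rw [map_mul, ha, one_mul, map_pow]
    rcases h.lt_or_gt with h | h
    · rw [Valuation.map_sub_eq_of_lt_right, h3, max_eq_right h.le]
      rw [h3, map_pow]
      exact pow_lt_pow_left₀ h zero_le two_ne_zero
    · rw [Valuation.map_sub_eq_of_lt_left, map_pow, max_eq_left h.le]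
      rw [h3, map_pow]
      exact pow_lt_pow_left₀ h zero_le two_ne_zero
  rcases eq_or_ne w 0 with rfl | hw
  · simp [h]
  have hvw : v w ≠ 0 := (Valuation.ne_zero_iff _).2 hw
  have hle : v (u / w) ≤ 1 := by rw [map_div₀, h, div_self hvw]
  obtain ⟨n, d, hnd⟩ := P.exists_primeCompl_mul_eq_of_integer (u / w) hle
  have hd : v (algebraMap (𝓞 F) F d) = 1 := (P.valuation_eq_one_iff_notMem).2 d.2
  -- `n ^ 2 - a d ^ 2` is prime to `P`, since `d` is invertible modulo `P`.
  have hmem : n ^ 2 - a * d ^ 2 ∉ P.asIdeal := by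
    intro hmem
    obtain ⟨e, i, hi, he⟩ := P.isMaximal.exists_inv (x := (d : 𝓞 F)) d.2
    refine hP (e * n) ?_
    have : (e * n) ^ 2 - a = e ^ 2 * (n ^ 2 - a * d ^ 2) + (a * (i - 2)) * i := by
      linear_combination (e * d + 1 - i) * a * he
    rw [this]
    exact add_mem (Ideal.mul_mem_left _ _ hmem) (Ideal.mul_mem_left _ _ hi)
  have h1 := (P.valuation_eq_one_iff_notMem (K := F)).2 hmem
  have h2 : u ^ 2 - a * w ^ 2 = w ^ 2 * (algebraMap (𝓞 F) F (n ^ 2 - a * d ^ 2)) /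
      (algebraMap (𝓞 F) F d) ^ 2 := by
    have hd0 : algebraMap (𝓞 F) F d ≠ 0 := (Valuation.ne_zero_iff v).1 (by simp [hd])
    rw [map_sub, map_mul, map_pow, map_pow, ← hnd]
    field_simp
  rw [h2, map_div₀, map_mul, h1, map_pow, map_pow, hd, h]
  simp

/-- The local criterion: if `a` is a non-square unit modulo `P` and `p` is a uniformizer at `P`,
the reduced norm `(u ^ 2 - a w ^ 2) - p (u' ^ 2 - a w' ^ 2)` of `(a, p / F)` is anisotropic, the two
halves having valuations of different parity. -/
theorem isUnit_of_inert (P : HeightOneSpectrum (𝓞 F)) (a : 𝓞 F)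
    (hP : ∀ c : 𝓞 F, c ^ 2 - a ∉ P.asIdeal) (haP : a ∉ P.asIdeal) (p : ℕ)
    (hp : (p : 𝓞 F) ∈ P.asIdeal) (hp2 : (p : 𝓞 F) ∉ P.asIdeal ^ 2)
    (x : ℍ[F, (a : F), (p : F)]) (hx : x ≠ 0) : IsUnit x := by
  have hval := valuation_sq_sub_eq P a hP haP
  set v := P.valuation F
  have hvp : v (p : F) = WithZero.exp (-1 : ℤ) := by
    have h : v (p : F) = P.intValuation (p : 𝓞 F) := by
      rw [← P.valuation_of_algebraMap (K := F)]
      simp [v]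
    rw [h]
    refine le_antisymm ?_ ?_
    · simpa using (P.intValuation_le_pow_iff_mem (p : 𝓞 F) 1).2 (by simpa using hp)
    · have := (P.intValuation_le_pow_iff_mem (p : 𝓞 F) 2).not.2 hp2
      rw [not_le] at this
      have h0 : P.intValuation (p : 𝓞 F) ≠ 0 := (zero_le.trans_lt this).ne'
      rw [← WithZero.exp_log h0] at this ⊢
      rw [WithZero.exp_lt_exp] at this
      rw [WithZero.exp_le_exp]
      push_cast at this
      omega
  obtain ⟨N, hN⟩ : ∃ N : F, N = (x.re ^ 2 - a * x.imI ^ 2) - p * (x.imJ ^ 2 - a * x.imK ^ 2) :=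
    ⟨_, rfl⟩
  have h1 : star x * x = (N : ℍ[F, (a : F), (p : F)]) := by
    ext <;> simp <;> (try rw [hN]) <;> ring
  have h2 : x * star x = (N : ℍ[F, (a : F), (p : F)]) := by
    ext <;> simp <;> (try rw [hN]) <;> ring
  have hN0 : N ≠ 0 := by
    intro h0
    have h3 := congrArg v (sub_eq_zero.1 (hN.symm.trans h0))
    rw [map_mul, hval, hval, hvp] at h3
    -- `exp (-1) * m₂ ^ 2 = m₁ ^ 2` forces both to vanish, by parity
    set m₁ := max (v x.re) (v x.imI) with hm₁
    set m₂ := max (v x.imJ) (v x.imK) with hm₂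
    have h4 : m₁ = 0 ∧ m₂ = 0 := by
      by_cases h : m₁ = 0
      · refine ⟨h, ?_⟩
        rw [h] at h3
        simpa using h3
      · have h' : m₂ ≠ 0 := by
          rintro h'
          rw [h'] at h3
          exact h (by simpa using h3)
        have h5 := congrArg WithZero.log h3
        rw [WithZero.log_mul WithZero.exp_ne_zero (pow_ne_zero _ h'), WithZero.log_pow,
          WithZero.log_pow, WithZero.log_exp, nsmul_eq_mul, nsmul_eq_mul] at h5
        push_cast at h5
        omega
    have h5 : v x.re = 0 ∧ v x.imI = 0 := by
      constructor <;> refine le_antisymm (h4.1 ▸ ?_) zero_le <;> simp [hm₁]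
    have h6 : v x.imJ = 0 ∧ v x.imK = 0 := by
      constructor <;> refine le_antisymm (h4.2 ▸ ?_) zero_le <;> simp [hm₂]
    simp only [Valuation.zero_iff] at h5 h6
    exact hx (QuaternionAlgebra.ext h5.1 h5.2 h6.1 h6.2)
  refine isUnit_iff_exists.2 ⟨(N⁻¹ : F) • star x, ?_, ?_⟩
  · rw [mul_smul_comm, h2]
    ext <;> simp [hN0]
  · rw [smul_mul_assoc, h1]
    ext <;> simp [hN0]
end

/-! ### Splitting of primes in `F(√a)` -/

section
variable {F K : Type*} [Field F] [NumberField F] [Field K] [NumberField K] [Algebra F K]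

/-- `2 a 𝓞_K ⊆ 𝓞_F + b 𝓞_F` when `K = F(b)` with `b ^ 2 = a`. -/
theorem exists_two_mul_mem (a : 𝓞 F) (b : 𝓞 K)
    (hb : b ^ 2 = algebraMap (𝓞 F) (𝓞 K) a) (σ : K →ₐ[F] K) (hσ : σ b = -b)
    (hspan : ∀ z : K, ∃ u v : F, z = algebraMap F K u + b * algebraMap F K v) (z : 𝓞 K) :
    ∃ t u : 𝓞 F, algebraMap (𝓞 F) (𝓞 K) (2 * a) * z =
      algebraMap (𝓞 F) (𝓞 K) t + b * algebraMap (𝓞 F) (𝓞 K) u := by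
  obtain ⟨u, v, huv⟩ := hspan z
  have hbK : (b : K) ^ 2 = algebraMap F K a := congrArg (algebraMap (𝓞 K) K) hb
  have hz : IsIntegral ℤ (z : K) := z.isIntegral_coe
  have hσz : IsIntegral ℤ (σ z) := hz.map (σ.restrictScalars ℤ)
  have hσz' : σ z = algebraMap F K u - b * algebraMap F K v := by
    rw [huv, map_add, map_mul, hσ, σ.commutes, σ.commutes]; ring
  -- the trace of `z` and the trace of `b z`
  have h1 : IsIntegral ℤ (2 * u) := by
    rw [← isIntegral_algebraMap_iff (FaithfulSMul.algebraMap_injective F K)]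
    have h : algebraMap F K (2 * u) = (z : K) + σ z := by
      rw [hσz', huv, map_mul, map_ofNat]; ring
    rw [h]
    exact hz.add hσz
  have h2 : IsIntegral ℤ (2 * a * v) := by
    rw [← isIntegral_algebraMap_iff (FaithfulSMul.algebraMap_injective F K)]
    have h : algebraMap F K (2 * a * v) = (b : K) * ((z : K) - σ z) := by
      rw [hσz', huv, map_mul, map_mul, map_ofNat, ← hbK]; ring
    rw [h]
    exact b.isIntegral_coe.mul (hz.sub hσz)
  refine ⟨a * ⟨2 * u, h1⟩, ⟨2 * a * v, h2⟩, RingOfIntegers.coe_injective ?_⟩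
  change algebraMap F K (2 * a) * (z : K) = algebraMap F K (a * (2 * u)) +
    b * algebraMap F K (2 * a * v)
  rw [huv]
  simp only [map_mul, map_ofNat]
  ring

/-- If `a ≡ c ^ 2` modulo a prime `P` of `F` not containing `2 a`, there is a prime `Q` of
`K = F(b)`, `b ^ 2 = a`, above `P` with `b ≡ c` modulo `Q` and with the same norm. The
hypotheses on `σ` and `hspan` say that `K = F + b F` with conjugation `b ↦ -b`. -/
theorem exists_prime_above (a : 𝓞 F) (b : 𝓞 K)
    (hb : b ^ 2 = algebraMap (𝓞 F) (𝓞 K) a) (σ : K →ₐ[F] K) (hσ : σ b = -b)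
    (hspan : ∀ z : K, ∃ u v : F, z = algebraMap F K u + b * algebraMap F K v)
    (P : HeightOneSpectrum (𝓞 F)) (h2a : 2 * a ∉ P.asIdeal) (c : 𝓞 F)
    (hc : c ^ 2 - a ∈ P.asIdeal) :
    ∃ Q : HeightOneSpectrum (𝓞 K), Q.asIdeal.comap (algebraMap (𝓞 F) (𝓞 K)) = P.asIdeal ∧
      b - algebraMap (𝓞 F) (𝓞 K) c ∈ Q.asIdeal ∧
      Ideal.absNorm Q.asIdeal = Ideal.absNorm P.asIdeal := by
  obtain ⟨Q₀, hQ₀p, hQ₀⟩ := Ideal.exists_ideal_over_prime_of_isIntegral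
    (S := 𝓞 K) P.asIdeal (⊥ : Ideal (𝓞 K)) (by simp)
  have hex : ∃ Q : Ideal (𝓞 K), Q.IsPrime ∧
      Q.comap (algebraMap (𝓞 F) (𝓞 K)) = P.asIdeal ∧ b - algebraMap (𝓞 F) (𝓞 K) c ∈ Q := by
    have := hQ₀.1
    have hmem : (b - algebraMap (𝓞 F) (𝓞 K) c) * (b + algebraMap (𝓞 F) (𝓞 K) c) ∈ Q₀ := by
      have h : a - c ^ 2 ∈ P.asIdeal := by simpa using P.asIdeal.neg_mem hc
      rw [← hQ₀.2, Ideal.mem_comap, map_sub, map_pow, ← hb] at h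
      convert h using 1; ring
    rcases hQ₀.1.mem_or_mem hmem with h | h
    · exact ⟨Q₀, hQ₀.1, hQ₀.2, h⟩
    · have hσb : RingOfIntegers.mapRingHom (σ : K →+* K) b = -b :=
        RingOfIntegers.coe_injective hσ
      have hσc (y : 𝓞 F) : RingOfIntegers.mapRingHom (σ : K →+* K)
          (algebraMap (𝓞 F) (𝓞 K) y) = algebraMap (𝓞 F) (𝓞 K) y :=
        RingOfIntegers.coe_injective (σ.commutes y)
      refine ⟨Q₀.comap (RingOfIntegers.mapRingHom (σ : K →+* K)), inferInstance, ?_, ?_⟩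
      · rw [← hQ₀.2]
        ext y
        simp only [Ideal.mem_comap, hσc]
      · rw [Ideal.mem_comap, map_sub, hσb, hσc, ← neg_mem_iff]
        convert h using 1; ring
  obtain ⟨Q, hQp, hQ, hbc⟩ := hex
  have hQ0 : Q ≠ ⊥ := by
    rintro rfl
    refine P.ne_bot ?_
    rw [← hQ]
    exact Ideal.comap_bot_of_injective _ (FaithfulSMul.algebraMap_injective _ _)
  refine ⟨⟨Q, hQp, hQ0⟩, hQ, hbc, ?_⟩
  -- `2 a` is invertible modulo `P` and `b ≡ c` modulo `Q`, so `𝓞 F` surjects onto `𝓞 K ⧸ Q`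
  obtain ⟨e, i, hi, he⟩ := P.isMaximal.exists_inv (x := 2 * a) h2a
  let f : 𝓞 F →+* 𝓞 K ⧸ Q := (Ideal.Quotient.mk Q).comp (algebraMap (𝓞 F) (𝓞 K))
  have hker : RingHom.ker f = P.asIdeal := by
    rw [← hQ, ← RingHom.comap_ker, Ideal.mk_ker]
  have hsurj : Function.Surjective f := by
    intro z
    obtain ⟨z, rfl⟩ := Ideal.Quotient.mk_surjective z
    obtain ⟨t, u, htu⟩ := exists_two_mul_mem a b hb σ hσ hspan z
    refine ⟨e * (t + c * u), ?_⟩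
    have hi0 : f i = 0 := by rwa [← RingHom.mem_ker, hker]
    have he' : f e * f (2 * a) = 1 := by
      rw [← map_mul, eq_sub_of_add_eq he, map_sub, hi0, map_one, sub_zero]
    have hbc' : Ideal.Quotient.mk Q b = f c := by
      rw [← sub_eq_zero]
      exact (map_sub (Ideal.Quotient.mk Q) _ _).symm.trans (Ideal.Quotient.eq_zero_iff_mem.2 hbc)
    have h := congrArg (Ideal.Quotient.mk Q) htu
    rw [map_mul (Ideal.Quotient.mk Q), map_add, map_mul (Ideal.Quotient.mk Q) b, hbc'] at h
    change f (2 * a) * _ = f t + f c * f u at h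
    rw [map_mul, map_add, map_mul f c, ← h, ← mul_assoc, he', one_mul]
  have e : (𝓞 F ⧸ P.asIdeal) ≃+* 𝓞 K ⧸ Q :=
    (Ideal.quotEquivOfEq hker.symm).trans (RingHom.quotientKerEquivOfSurjective hsurj)
  rw [Ideal.absNorm_apply, Ideal.absNorm_apply, Submodule.cardQuot_apply,
    Submodule.cardQuot_apply]
  exact (Nat.card_congr e.toEquiv).symm
end

/-! ### Existence of inert primes -/

section
variable {F K : Type*} [Field F] [NumberField F] [Field K] [NumberField K] [Algebra F K]

/-- If `a` is a square modulo every prime `P ∉ T`, each such `P` splits into two primes of norm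
`N P` in `K = F(√a)`. Each of the finitely many other Euler factors of `F` is at most `2` for
`s ≥ 1`, and the Euler product of `K` dominates the square of the rest. -/
theorem eulerSum_sq_le (a : 𝓞 F) (b : 𝓞 K)
    (hb : b ^ 2 = algebraMap (𝓞 F) (𝓞 K) a) (σ : K →ₐ[F] K) (hσ : σ b = -b)
    (hspan : ∀ z : K, ∃ u v : F, z = algebraMap F K u + b * algebraMap F K v)
    (T : Finset (HeightOneSpectrum (𝓞 F))) (hT : ∀ P ∉ T, 2 * a ∉ P.asIdeal)
    (hsq : ∀ P ∉ T, ∃ c : 𝓞 F, c ^ 2 - a ∈ P.asIdeal) (s : ℝ) (hs : 1 ≤ s) :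
    eulerSum F s ^ 2 ≤ 4 ^ T.card * eulerSum K s := by
  classical
  choose! c hc using hsq
  have h1 (i : {P // P ∉ T}) := exists_prime_above a b hb σ hσ hspan i.1 (hT _ i.2) (c i.1)
    (hc _ i.2)
  have h2 (i : {P // P ∉ T}) := exists_prime_above a b hb σ hσ hspan i.1 (hT _ i.2) (-c i.1)
    (by rw [neg_sq]; exact hc _ i.2)
  choose Q₁ hQ₁ hbQ₁ hN₁ using h1
  choose Q₂ hQ₂ hbQ₂ hN₂ using h2
  -- a prime containing both `b - c` and `b + c` contains `2 c`, hence `4 a`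
  have hne (i j) : Q₁ i ≠ Q₂ j := by
    intro h
    have hij : i = j := Subtype.ext (HeightOneSpectrum.ext (by rw [← hQ₁, ← hQ₂, h]))
    subst hij
    have h3 := (Q₁ i).asIdeal.sub_mem (h ▸ hbQ₂ i) (hbQ₁ i)
    have h4 : 2 * c i.1 ∈ i.1.asIdeal := by
      rw [← hQ₁ i, Ideal.mem_comap]
      convert h3 using 1
      rw [map_mul, map_ofNat, map_neg]; ring
    -- `2 * (2 * a) = (2 * c) ^ 2 - 4 * (c ^ 2 - a)`
    have h5 : 2 * (2 * a) ∈ i.1.asIdeal := by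
      convert i.1.asIdeal.sub_mem (i.1.asIdeal.mul_mem_left (2 * c i.1) h4)
        (i.1.asIdeal.mul_mem_left 4 (hc _ i.2)) using 1
      ring
    rcases i.1.isPrime.mem_or_mem h5 with h | h
    · exact hT _ i.2 (i.1.asIdeal.mul_mem_right _ h)
    · exact hT _ i.2 h
  set x : HeightOneSpectrum (𝓞 F) → ℝ≥0∞ :=
    fun P => (Ideal.absNorm P.asIdeal : ℝ≥0∞) ^ (-s) with hx
  have hfac (P : HeightOneSpectrum (𝓞 F)) : (1 - x P)⁻¹ ≤ 2 := by
    have h2 : 2 ≤ Ideal.absNorm P.asIdeal := by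
      have h0 : Ideal.absNorm P.asIdeal ≠ 0 := by
        rw [Ne, Ideal.absNorm_eq_zero_iff]; exact P.ne_bot
      have h1 : Ideal.absNorm P.asIdeal ≠ 1 := by
        rw [Ne, Ideal.absNorm_eq_one_iff]; exact P.isPrime.ne_top
      omega
    have hle : x P ≤ 2⁻¹ := by
      simp only [hx, ENNReal.rpow_neg]
      refine ENNReal.inv_le_inv.2 ?_
      calc (2 : ℝ≥0∞) ≤ (Ideal.absNorm P.asIdeal : ℝ≥0∞) := by exact_mod_cast h2
        _ = (Ideal.absNorm P.asIdeal : ℝ≥0∞) ^ (1 : ℝ) := (ENNReal.rpow_one _).symm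
        _ ≤ _ := ENNReal.rpow_le_rpow_of_exponent_le (by exact_mod_cast (by omega)) hs
    rw [ENNReal.inv_le_iff_inv_le]
    calc (2 : ℝ≥0∞)⁻¹ = 1 - 2⁻¹ := ENNReal.one_sub_inv_two.symm
      _ ≤ _ := tsub_le_tsub_left hle _
  have hA := tsum_multiset_le_avoid x T
  have hB := sq_tsum_multiset_le (fun i : {P // P ∉ T} => x i)
    (fun Q : HeightOneSpectrum (𝓞 K) => (Ideal.absNorm Q.asIdeal : ℝ≥0∞) ^ (-s))
    (Sum.elim Q₁ Q₂)
    (Function.Injective.sumElim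
      (fun i j h => Subtype.ext (HeightOneSpectrum.ext (by rw [← hQ₁, ← hQ₁, h])))
      (fun i j h => Subtype.ext (HeightOneSpectrum.ext (by rw [← hQ₂, ← hQ₂, h]))) hne)
    (fun i => by simp [hx, hN₁]) (fun i => by simp [hx, hN₂])
  have hprod : ∏ q ∈ T, (1 - x q)⁻¹ ≤ 2 ^ T.card :=
    Finset.prod_le_pow_card _ _ _ fun q _ => hfac q
  calc eulerSum F s ^ 2
      ≤ (2 ^ T.card * ∑' m : Multiset {P // P ∉ T}, (m.map fun i : {P // P ∉ T} => x i).prod) ^ 2 := by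
        gcongr
        exact hA.trans (by gcongr)
    _ = 4 ^ T.card * (∑' m : Multiset {P // P ∉ T}, (m.map fun i : {P // P ∉ T} => x i).prod) ^ 2 := by
        rw [mul_pow, ← pow_mul, mul_comm T.card 2, pow_mul]; norm_num
    _ ≤ _ := by gcongr; exact hB

/-- Some prime outside `T` is inert in `K = F(√a)`: otherwise `ζ_F ^ 2 = O(ζ_K)` near `1`, while
the left side has a double pole and the right side a simple one. -/
theorem exists_prime_not_sq (a : 𝓞 F) (b : 𝓞 K)
    (hb : b ^ 2 = algebraMap (𝓞 F) (𝓞 K) a) (σ : K →ₐ[F] K) (hσ : σ b = -b)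
    (hspan : ∀ z : K, ∃ u v : F, z = algebraMap F K u + b * algebraMap F K v)
    (T : Finset (HeightOneSpectrum (𝓞 F))) (hT : ∀ P ∉ T, 2 * a ∉ P.asIdeal) :
    ∃ P ∉ T, ∀ c : 𝓞 F, c ^ 2 - a ∉ P.asIdeal := by
  by_contra! hsq
  obtain ⟨hF, hF'⟩ := tendsto_eulerSum F
  obtain ⟨hK, hK'⟩ := tendsto_eulerSum K
  have hs0 : Tendsto (fun s : ℝ => s - 1) (𝓝[>] 1) (𝓝 0) :=
    tendsto_nhdsWithin_of_tendsto_nhds (by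
      simpa using (continuous_id.sub continuous_const).tendsto (1 : ℝ) (f := fun s : ℝ => s - 1))
  have hR := ((hs0.mul hK').const_mul (4 ^ T.card))
  have hL := hF'.pow 2
  have hle : dedekindZeta_residue F ^ 2 ≤ 4 ^ T.card * (0 * dedekindZeta_residue K) := by
    refine le_of_tendsto_of_tendsto hL hR ?_
    filter_upwards [hF, hK, self_mem_nhdsWithin] with s h1 h2 hs
    have h := eulerSum_sq_le a b hb σ hσ hspan T hT hsq s (le_of_lt hs)
    have h' := ENNReal.toReal_mono (ENNReal.mul_ne_top (by simp) h2) h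
    rw [ENNReal.toReal_pow, ENNReal.toReal_mul, ENNReal.toReal_pow, ENNReal.toReal_ofNat] at h'
    calc ((s - 1) * (eulerSum F s).toReal) ^ 2
        = (s - 1) ^ 2 * (eulerSum F s).toReal ^ 2 := by ring
      _ ≤ (s - 1) ^ 2 * (4 ^ T.card * (eulerSum K s).toReal) := by gcongr
      _ = _ := by ring
  have := pow_pos (dedekindZeta_residue_pos F) 2
  rw [zero_mul, mul_zero] at hle
  exact this.not_ge hle

end

section
open Polynomial

/-- The case `K = AdjoinRoot (X ^ 2 - a)` of `exists_prime_not_sq`. -/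
theorem exists_prime_not_sq_of_not_isSquare (F : Type*) [Field F] [NumberField F] (a : 𝓞 F)
    (hasq : ¬ ∃ y : F, y ^ 2 = (a : F))
    (T : Finset (HeightOneSpectrum (𝓞 F))) (hT : ∀ P ∉ T, 2 * a ∉ P.asIdeal) :
    ∃ P ∉ T, ∀ c : 𝓞 F, c ^ 2 - a ∉ P.asIdeal := by
  have hmon : (X ^ 2 - C (a : F)).Monic := monic_X_pow_sub_C _ two_ne_zero
  have hirr : Irreducible (X ^ 2 - C (a : F)) := by
    rw [X_pow_sub_C_irreducible_iff_of_prime Nat.prime_two]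
    exact fun y hy => hasq ⟨y, hy⟩
  have : Fact (Irreducible (X ^ 2 - C (a : F))) := ⟨hirr⟩
  let K := AdjoinRoot (X ^ 2 - C (a : F))
  have : FiniteDimensional F K := (AdjoinRoot.powerBasis hirr.ne_zero).finite
  have : CharZero K := charZero_of_injective_algebraMap (algebraMap F K).injective
  have : FiniteDimensional ℚ K := .trans ℚ F K
  have : NumberField K := ⟨⟩
  let r : K := AdjoinRoot.root (X ^ 2 - C (a : F))
  have hr : r ^ 2 = algebraMap F K a := by
    have := AdjoinRoot.eval₂_root (X ^ 2 - C (a : F))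
    rw [eval₂_sub, eval₂_X_pow, eval₂_C, sub_eq_zero] at this
    exact this
  have hint : IsIntegral ℤ r := by
    refine IsIntegral.of_pow two_pos ?_
    rw [hr]
    exact (a.isIntegral_coe).map (algebraMap F K).toIntAlgHom
  let σ : K →ₐ[F] K := AdjoinRoot.liftAlgHom _ (Algebra.ofId F K) (-r) (by
    have : (-r) ^ 2 = algebraMap F K a := by rw [neg_sq, hr]
    simpa [sub_eq_zero, Algebra.ofId_apply] using this)
  have hσ : σ r = -r := AdjoinRoot.liftAlgHom_root _ _ _ _
  refine exists_prime_not_sq (K := K) a ⟨r, hint⟩ (RingOfIntegers.coe_injective hr) σ hσ ?_ T hT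
  intro z
  obtain ⟨g, rfl⟩ := AdjoinRoot.mk_surjective z
  refine ⟨(g %ₘ (X ^ 2 - C (a : F))).coeff 0, (g %ₘ (X ^ 2 - C (a : F))).coeff 1, ?_⟩
  have hdeg : (g %ₘ (X ^ 2 - C (a : F))).natDegree ≤ 1 := by
    have := natDegree_modByMonic_lt g hmon (by
      intro h; have := congrArg natDegree h; simp at this)
    rw [natDegree_X_pow_sub_C] at this
    omega
  have hg : AdjoinRoot.mk (X ^ 2 - C (a : F)) g =
      AdjoinRoot.mk (X ^ 2 - C (a : F)) (g %ₘ (X ^ 2 - C (a : F))) :=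
    AdjoinRoot.mk_eq_mk.2
      ⟨g /ₘ (X ^ 2 - C (a : F)), sub_eq_of_eq_add' (modByMonic_add_div g _).symm⟩
  rw [hg]
  conv_lhs => rw [eq_X_add_C_of_natDegree_le_one hdeg]
  rw [map_add, map_mul, AdjoinRoot.mk_C, AdjoinRoot.mk_C, AdjoinRoot.mk_X, add_comm, mul_comm]
  rfl

end

end

/-! ### The division algebra -/

open NumberField Quaternion

/-- Let `F` be a totally real number field and `a` a nonzero element of the
ring of integers `𝓞 F` that is not a square in `F` and is totally negative. Then there exists
a prime number `p` such that the quaternion algebra `(a, p / F)` is a division ring (every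
nonzero element is a unit). -/
theorem exists_prime_quaternionAlgebra_isDivisionRing
    (F : Type*) [Field F] [NumberField F]
    (hF : ∀ φ : F →+* ℂ, ComplexEmbedding.IsReal φ)
    (a : 𝓞 F) (ha0 : a ≠ 0)
    (hasq : ¬ ∃ y : F, y ^ 2 = (a : F))
    (haneg : ∀ σ : F →+* ℝ, σ (a : F) < 0) :
    ∃ p : ℕ, p.Prime ∧
      ∀ x : ℍ[F, (a : F), (p : F)], x ≠ 0 → IsUnit x := by
  -- exclude the primes dividing `2 a` or the different
  have hI : Ideal.span {2 * a} * differentIdeal ℤ (𝓞 F) ≠ 0 :=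
    mul_ne_zero (by simpa using ha0) differentIdeal_ne_bot
  obtain ⟨P, hPT, hP⟩ := exists_prime_not_sq_of_not_isSquare F a hasq
    (Ideal.finite_factors hI).toFinset (fun P hP h => hP (by
      rw [Set.Finite.mem_toFinset]
      exact ((Ideal.dvd_span_singleton).2 h).mul_right _))
  have hPI : ¬ P.asIdeal ∣ Ideal.span {2 * a} * differentIdeal ℤ (𝓞 F) := by simpa using hPT
  have haP : a ∉ P.asIdeal := fun h =>
    hPI ((Ideal.dvd_span_singleton.2 (P.asIdeal.mul_mem_left 2 h)).mul_right _)
  have := P.isMaximal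
  obtain ⟨p, -, -, hpP, hp, -⟩ := Ideal.exists_prime_and_absNorm_eq_pow P.asIdeal
  exact ⟨p, hp, isUnit_of_inert P a hP haP p hpP
    (natCast_notMem_sq P.asIdeal p hp fun h => hPI (h.mul_left _))⟩
end

section
/- Let γ ∈ ℂ be a root of the polynomial S(X) = X⁴ − X³ − X² − X + 1 and let K = ℚ(γ) ⊆ ℂ with ring of integers O_K. Then the ideal 5·O_K generated by 5 in O_K is a prime ideal. -/
/-!
Write `S = X⁴ − X³ − X² − X + 1`. The polynomial `S` stays irreducible modulo `5`
(`irreducible_S_mod_five`), and this forces `5` to be inert, without any need to know whether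
`ℤ[γ]` is the full ring of integers. Indeed, let `M` be a maximal ideal of `𝓞 K` containing `5`.
The image of `γ` in the residue field `𝓞 K ⧸ M` is a root of `S` mod `5`, hence generates an
extension of `𝔽₅` of degree `4`, so `M` has norm at least `5 ^ 4`
(`five_pow_four_le_absNorm`). On the other hand `5 · 𝓞 K` has norm `5 ^ [K : ℚ] ≤ 5 ^ 4`
(`finrank_le_four`). Since `M` divides `5 · 𝓞 K`, comparing norms gives `M = 5 · 𝓞 K`.
-/

open NumberField

open Polynomial in
theorem monic_S {R : Type*} [CommRing R] [Nontrivial R] :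
    (X ^ 4 - X ^ 3 - X ^ 2 - X + 1 : R[X]).Monic := by
  monicity!

open Polynomial in
theorem natDegree_S {R : Type*} [CommRing R] [Nontrivial R] :
    (X ^ 4 - X ^ 3 - X ^ 2 - X + 1 : R[X]).natDegree = 4 := by
  compute_degree!

instance : Fact (Nat.Prime 5) := ⟨by norm_num⟩

open Polynomial in
/-- A proper factorization would produce a root in `𝔽₅` or a product of two monic quadratics; both
are excluded by checking the finitely many candidates for the coefficients. -/
theorem irreducible_S_mod_five :
    Irreducible (X ^ 4 - X ^ 3 - X ^ 2 - X + 1 : (ZMod 5)[X]) := by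
  have hne : (X ^ 4 - X ^ 3 - X ^ 2 - X + 1 : (ZMod 5)[X]) ≠ 1 := by
    intro h
    have := natDegree_S (R := ZMod 5)
    rw [h] at this
    simp at this
  rw [monic_S.irreducible_iff_lt_natDegree_lt hne, natDegree_S]
  rintro q hq hdeg ⟨r, hr⟩
  have hrm : r.Monic := hq.of_mul_monic_left (hr ▸ monic_S)
  have hsum : q.natDegree + r.natDegree = 4 := by
    rw [← hq.natDegree_mul hrm, ← hr, natDegree_S]
  simp only [Finset.mem_Ioc] at hdeg
  obtain h1 | h2 : q.natDegree = 1 ∨ q.natDegree = 2 := by omega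
  · have hq1 : q = X + C (q.coeff 0) := hq.eq_X_add_C h1
    have hev := congrArg (eval (-q.coeff 0)) hr
    rw [hq1] at hev
    simp only [eval_add, eval_sub, eval_mul, eval_pow, eval_X, eval_one, eval_C, coeff_add,
      coeff_X_zero, coeff_C_zero, zero_add, neg_add_cancel, zero_mul] at hev
    generalize q.coeff 0 = a at hev
    revert a
    decide
  · have hr2 : r.natDegree = 2 := by omega
    have hquad : ∀ p : (ZMod 5)[X], p.Monic → p.natDegree = 2 →
        p = X ^ 2 + C (p.coeff 1) * X + C (p.coeff 0) := by
      intro p hp hp2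
      have h2 : p.coeff 2 = 1 := hp2 ▸ hp.coeff_natDegree
      conv_lhs => rw [p.as_sum_range_C_mul_X_pow, hp2]
      simp [Finset.sum_range_succ, h2]
      ring
    have hq' := hquad q hq h2
    have hr' := hquad r hrm hr2
    generalize q.coeff 0 = b at hq'
    generalize q.coeff 1 = a at hq'
    generalize r.coeff 0 = d at hr'
    generalize r.coeff 1 = c at hr'
    have key : (X ^ 4 - X ^ 3 - X ^ 2 - X + 1 : (ZMod 5)[X]) =
        X ^ 4 + C (a + c) * X ^ 3 + C (b + d + a * c) * X ^ 2 + C (a * d + b * c) * X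
          + C (b * d) := by
      rw [hr, hq', hr']
      simp only [map_add, map_mul]
      ring
    have k0 := congrArg (fun p => coeff p 0) key
    have k1 := congrArg (fun p => coeff p 1) key
    have k2 := congrArg (fun p => coeff p 2) key
    have k3 := congrArg (fun p => coeff p 3) key
    simp [-map_add, -map_mul, coeff_X, coeff_one, coeff_X_pow] at k0 k1 k2 k3
    clear key hq' hr' hr
    revert a b c d
    decide

open Polynomial in
theorem finrank_le_four (K : Type*) [Field K] [NumberField K] (γ : K)
    (hroot : γ ^ 4 - γ ^ 3 - γ ^ 2 - γ + 1 = 0)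
    (hgen : Algebra.adjoin ℚ {γ} = ⊤) : Module.finrank ℚ K ≤ 4 := by
  have hint : IsIntegral ℚ γ := Algebra.IsIntegral.isIntegral γ
  rw [(PowerBasis.ofAdjoinEqTop hint hgen).finrank, PowerBasis.ofAdjoinEqTop_dim,
    ← natDegree_S (R := ℚ)]
  exact natDegree_le_of_dvd (minpoly.dvd ℚ γ (by simpa using hroot)) monic_S.ne_zero

open Polynomial in
/-- The residue field at `M` contains a root of the irreducible quartic `S` mod `5`, so it has
degree at least `4` over `𝔽₅`. -/
theorem five_pow_four_le_absNorm {K : Type*} [Field K] [NumberField K] (g : 𝓞 K)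
    (hroot : g ^ 4 - g ^ 3 - g ^ 2 - g + 1 = 0) (M : Ideal (𝓞 K)) [M.IsMaximal]
    (h5 : (5 : 𝓞 K) ∈ M) : 5 ^ 4 ≤ Ideal.absNorm M := by
  let := Ideal.Quotient.field M
  have hM : M ≠ ⊥ := by
    rintro rfl
    simp at h5
  have : Finite (𝓞 K ⧸ M) := M.finiteQuotientOfFreeOfNeBot hM
  have h50 : ((5 : ℕ) : 𝓞 K ⧸ M) = 0 := by
    rw [← map_natCast (Ideal.Quotient.mk M) 5, Ideal.Quotient.eq_zero_iff_mem]
    exact_mod_cast h5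
  have : CharP (𝓞 K ⧸ M) 5 := (CharP.charP_iff_prime_eq_zero (by norm_num)).2 h50
  let := ZMod.algebra (𝓞 K ⧸ M) 5
  have hg := congrArg (Ideal.Quotient.mk M) hroot
  simp only [map_add, map_sub, map_pow, map_one, map_zero] at hg
  have hmin := minpoly.eq_of_irreducible_of_monic irreducible_S_mod_five
    (x := Ideal.Quotient.mk M g) (by simpa using hg) monic_S
  have hle := minpoly.natDegree_le (A := ZMod 5) (Ideal.Quotient.mk M g)
  rw [← hmin, natDegree_S] at hle
  have hcard : Ideal.absNorm M = Nat.card (𝓞 K ⧸ M) := rfl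
  rw [hcard, Module.natCard_eq_pow_finrank (K := ZMod 5), Nat.card_zmod]
  exact Nat.pow_le_pow_right (by norm_num) hle

/-- Let `γ ∈ ℂ` be a root of `S(X) = X⁴ − X³ − X² − X + 1` and
`K = ℚ(γ)` with ring of integers `𝓞 K`. Then the ideal `5 · 𝓞 K` is a prime ideal. -/
theorem five_isPrime_in_ringOfIntegers
    (K : Type*) [Field K] [NumberField K] (γ : K)
    (hroot : γ ^ 4 - γ ^ 3 - γ ^ 2 - γ + 1 = 0)
    (hgen : Algebra.adjoin ℚ {γ} = ⊤) :
    (Ideal.span {(5 : 𝓞 K)}).IsPrime := by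
  have hγ : IsIntegral ℤ γ :=
    ⟨_, monic_S, by simpa using hroot⟩
  obtain ⟨g, rfl⟩ : ∃ g : 𝓞 K, (g : K) = γ := ⟨⟨γ, hγ⟩, rfl⟩
  have hg : g ^ 4 - g ^ 3 - g ^ 2 - g + 1 = 0 := by
    apply RingOfIntegers.coe_injective
    simpa using hroot
  have hnorm : Ideal.absNorm (Ideal.span {(5 : 𝓞 K)}) = 5 ^ Module.finrank ℚ K := by
    rw [← RingOfIntegers.rank]
    exact_mod_cast Ideal.absNorm_span_natCast (S := 𝓞 K) 5
  have hpos := Module.finrank_pos (R := ℚ) (M := K)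
  have htop : Ideal.span {(5 : 𝓞 K)} ≠ ⊤ := by
    rw [Ne, ← Ideal.absNorm_eq_one_iff, hnorm]
    exact (Nat.one_lt_pow hpos.ne' (by norm_num)).ne'
  obtain ⟨M, hM, hle⟩ := Ideal.exists_le_maximal _ htop
  have hlow := five_pow_four_le_absNorm g hg M (hle (Ideal.mem_span_singleton_self _))
  have hupp : Ideal.absNorm (Ideal.span {(5 : 𝓞 K)}) ≤ 5 ^ 4 :=
    hnorm ▸ Nat.pow_le_pow_right (by norm_num) (finrank_le_four K _ hroot hgen)
  obtain ⟨J, hJ⟩ := Ideal.dvd_iff_le.2 hle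
  -- The cofactor `J` of `M` in `(5)` has norm `1`, because `N(M) ≥ 5 ^ 4 ≥ N(5) = N(M) N(J)`.
  have hJ1 : Ideal.absNorm J = 1 := by
    have h0 : Ideal.absNorm (Ideal.span {(5 : 𝓞 K)}) ≠ 0 := by rw [hnorm]; positivity
    rw [hJ, map_mul] at hupp h0
    have := Nat.pos_of_ne_zero (right_ne_zero_of_mul h0)
    nlinarith
  rw [hJ, Ideal.absNorm_eq_one_iff.1 hJ1, Ideal.mul_top]
  exact hM.isPrime
end
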